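/- arXiv:math/0108082 — 2 statements merged into one kernel-verified Lean document; each statement's English description precedes it below -/
import Mathlib

section
/- Let A be a finite abelian group and μ a stationary Markov measure on A^ℤ with strictly positive transition matrix. If ν is a probability measure absolutely continuous with respect to μ, then ν is harmonically mixing. -/
open MeasureTheory

/-- Evaluation at `x` of the character of `A^ℤ` with coefficient system `χ`. -/
noncomputable def charEval {A : Type*} [AddCommGroup A] (χ : ℤ → AddChar A ℂ)
    (x : ℤ → A) : ℂ :=
  ∏ᶠ i, χ i (x i)

/-- Harmonic mixing of a measure on `A^ℤ`. -/
def HarmonicallyMixing {A : Type*} [AddCommGroup A] [MeasurableSpace A]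
    (μ : Measure (ℤ → A)) : Prop :=
  ∀ ε > 0, ∃ R : ℕ, ∀ χ : ℤ → AddChar A ℂ, {i | χ i ≠ 1}.Finite →
    R < {i | χ i ≠ 1}.ncard → ‖∫ x, charEval χ x ∂μ‖ < ε

/-!
For a probability vector `p` and a positive stochastic matrix `Q` with entries at least `q`,
inserting a weight `h` with `∑ b, h b = 0` between two steps of the chain kills the part `q * J` of
`Q` (`J` the all-ones matrix), so two steps contract the supremum norm by the factor
`1 - (|A| q)²`. Nontrivial characters of `A` sum to `0`, so a character of rank `r` inserts `r` such
weights, hence a Markov measure is harmonically mixing.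

Harmonic mixing is inherited by absolutely continuous measures, whatever the mixing measure is: an
indicator of one coordinate is a linear combination of characters of `A`, and multiplying by a
character of rank at most `1` barely changes the rank, so harmonic mixing passes to restrictions to
cylinders. As the harmonically mixing measures are stable under differences and under countable sums
of finite total mass, it then passes to restrictions to measurable sets and to densities.

The σ-algebra of `A` is not given as discrete, but the one-letter probabilities force it to be: two
letters that no measurable set separates would have the same outer measure as their union, so the
positive weights of the letters could not add up to `1`.
-/

open Filter Function Topology
open scoped NNReal ENNReal

section Characters

variable {A : Type*} [AddCommGroup A] {χ η : ℤ → AddChar A ℂ}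

theorem charEval_eq_prod {s : Finset ℤ} (hs : mulSupport χ ⊆ s) (x : ℤ → A) :
    charEval χ x = ∏ i ∈ s, χ i (x i) :=
  finprod_eq_prod_of_mulSupport_subset _ fun i hi => hs fun hχi => hi (by simp [hχi])

theorem charEval_eq_prod_univ {ι : Type*} [Fintype ι] {e : ι ↪ ℤ} (he : mulSupport χ ⊆ Set.range e)
    (x : ℤ → A) : charEval χ x = ∏ i, χ (e i) (x (e i)) := by
  rw [charEval_eq_prod (s := Finset.univ.map e) (by simpa using he), Finset.prod_map]

theorem charEval_mul (hχ : (mulSupport χ).Finite) (hη : (mulSupport η).Finite) (x : ℤ → A) :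
    charEval (χ * η) x = charEval χ x * charEval η x := by
  have hfin : ∀ {ξ : ℤ → AddChar A ℂ}, (mulSupport ξ).Finite →
      HasFiniteMulSupport fun i => ξ i (x i) :=
    fun hξ => hξ.subset fun i hi hξi => hi (by simp [hξi])
  exact finprod_mul_distrib (hfin hχ) (hfin hη)

theorem charEval_mulSingle (i : ℤ) (ψ : AddChar A ℂ) (x : ℤ → A) :
    charEval (Pi.mulSingle i ψ) x = ψ (x i) := by
  rw [charEval, finprod_eq_single _ i fun j hj => by simp [hj], Pi.mulSingle_eq_same]

theorem finite_mulSupport_mulSingle (i : ℤ) (ψ : AddChar A ℂ) :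
    (mulSupport (Pi.mulSingle i ψ : ℤ → AddChar A ℂ)).Finite :=
  (Set.finite_singleton i).subset Pi.mulSupport_mulSingle_subset

theorem exists_indicator_charEval_eq_sum [Finite A] [Fintype (AddChar A ℂ)] (i : ℤ) (s : Set A) :
    ∃ c : AddChar A ℂ → ℂ, ∀ χ : ℤ → AddChar A ℂ, (mulSupport χ).Finite → ∀ x,
      (eval i ⁻¹' s).indicator (charEval χ) x
        = ∑ ψ, c ψ * charEval (χ * Pi.mulSingle i ψ) x := by
  classical
  refine ⟨(AddChar.complexBasis A).repr (s.indicator 1), fun χ hχ x => ?_⟩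
  set c := (AddChar.complexBasis A).repr (s.indicator 1)
  have hexpand : s.indicator (1 : A → ℂ) (x i) = ∑ ψ, c ψ * ψ (x i) := by
    simpa using congrFun ((AddChar.complexBasis A).sum_repr (s.indicator 1)).symm (x i)
  calc (eval i ⁻¹' s).indicator (charEval χ) x
      = charEval χ x * s.indicator (1 : A → ℂ) (x i) := by
        by_cases hx : x i ∈ s <;> simp [hx]
    _ = ∑ ψ, c ψ * charEval (χ * Pi.mulSingle i ψ) x := by
        rw [hexpand, Finset.mul_sum]
        refine Finset.sum_congr rfl fun ψ _ => ?_
        rw [charEval_mul hχ (finite_mulSupport_mulSingle i ψ), charEval_mulSingle, mul_left_comm]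

theorem norm_charEval_le_one [Finite A] (hχ : (mulSupport χ).Finite) (x : ℤ → A) :
    ‖charEval χ x‖ ≤ 1 := by
  simp [charEval_eq_prod hχ.coe_toFinset.ge, AddChar.norm_apply]

section Measurable

variable [MeasurableSpace A] [DiscreteMeasurableSpace A]

theorem measurable_charEval (hχ : (mulSupport χ).Finite) : Measurable (charEval χ) := by
  rw [funext (charEval_eq_prod hχ.coe_toFinset.ge)]
  exact Finset.measurable_prod _ fun i _ =>
    (Measurable.of_discrete (f := χ i)).comp (measurable_pi_apply i)

theorem integrable_charEval [Finite A] (hχ : (mulSupport χ).Finite) (μ : Measure (ℤ → A))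
    [IsFiniteMeasure μ] : Integrable (charEval χ) μ :=
  .of_bound (measurable_charEval hχ).aestronglyMeasurable 1 (.of_forall (norm_charEval_le_one hχ))

end Measurable

/-- The filter along which the rank of a coefficient system is finite and tends to infinity.
Systems of infinite support are excluded because `Set.ncard` is `0` on infinite sets. -/
noncomputable def highRank (A : Type*) [AddCommGroup A] : Filter (ℤ → AddChar A ℂ) :=
  comap (fun χ => (mulSupport χ).ncard) atTop

theorem eventually_finite_mulSupport_highRank :
    ∀ᶠ χ in highRank A, (mulSupport χ).Finite := by
  filter_upwards [tendsto_comap.eventually (eventually_gt_atTop 0)] with χ hχ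
  exact Set.finite_of_ncard_pos hχ

theorem tendsto_mul_right_highRank (hη : (mulSupport η).Finite) :
    Tendsto (fun χ => χ * η) (highRank A) (highRank A) := by
  refine tendsto_comap_iff.2 (tendsto_atTop_mono' _ ?_
    ((tendsto_sub_atTop_nat (mulSupport η).ncard).comp tendsto_comap))
  filter_upwards [eventually_finite_mulSupport_highRank] with χ hχ
  have hχη : (mulSupport (χ * η)).Finite := (hχ.union hη).subset (mulSupport_mul χ η)
  have hsub : mulSupport χ ⊆ mulSupport (χ * η) ∪ mulSupport η := by
    simpa using mulSupport_mul (χ * η) η⁻¹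
  have hle := (Set.ncard_le_ncard hsub (hχη.union hη)).trans (Set.ncard_union_le _ _)
  simpa using hle

theorem harmonicallyMixing_iff_tendsto [MeasurableSpace A] {μ : Measure (ℤ → A)} :
    HarmonicallyMixing μ ↔ Tendsto (fun χ => ∫ x, charEval χ x ∂μ) (highRank A) (𝓝 0) := by
  refine ⟨fun h => Metric.tendsto_nhds.2 fun ε hε => ?_, fun h ε hε => ?_⟩
  · obtain ⟨R, hR⟩ := h ε hε
    filter_upwards [tendsto_comap.eventually (eventually_gt_atTop R),
      eventually_finite_mulSupport_highRank] with χ hrank hχ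
    simpa using hR χ hχ hrank
  · obtain ⟨R, hR⟩ := eventually_atTop.1 (eventually_comap.1 (Metric.tendsto_nhds.1 h ε hε))
    exact ⟨R, fun χ _ hrank => by simpa using hR _ hrank.le χ rfl⟩

end Characters

namespace HarmonicallyMixing

variable {A : Type*} [AddCommGroup A] [MeasurableSpace A] {μ ν : Measure (ℤ → A)}

protected theorem zero : HarmonicallyMixing (0 : Measure (ℤ → A)) :=
  fun _ hε => ⟨0, fun _ _ _ => by simpa using hε⟩

protected theorem smul (hμ : HarmonicallyMixing μ) (c : ℝ≥0) : HarmonicallyMixing (c • μ) := by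
  rw [harmonicallyMixing_iff_tendsto] at hμ ⊢
  simpa only [integral_smul_nnreal_measure, smul_zero] using hμ.const_smul c

variable [Finite A] [DiscreteMeasurableSpace A]

protected theorem add [IsFiniteMeasure μ] [IsFiniteMeasure ν] (hμ : HarmonicallyMixing μ)
    (hν : HarmonicallyMixing ν) : HarmonicallyMixing (μ + ν) := by
  rw [harmonicallyMixing_iff_tendsto] at hμ hν ⊢
  have hadd := hμ.add hν
  rw [add_zero] at hadd
  refine hadd.congr' ?_
  filter_upwards [eventually_finite_mulSupport_highRank] with χ hχ
  rw [integral_add_measure (integrable_charEval hχ μ) (integrable_charEval hχ ν)]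

theorem of_add_left [IsFiniteMeasure μ] [IsFiniteMeasure ν] (hμ : HarmonicallyMixing μ)
    (hadd : HarmonicallyMixing (μ + ν)) : HarmonicallyMixing ν := by
  rw [harmonicallyMixing_iff_tendsto] at hμ hadd ⊢
  have hsub := hadd.sub hμ
  rw [sub_zero] at hsub
  refine hsub.congr' ?_
  filter_upwards [eventually_finite_mulSupport_highRank] with χ hχ
  rw [integral_add_measure (integrable_charEval hχ μ) (integrable_charEval hχ ν),
    add_sub_cancel_left]

protected theorem sum {ι : Type*} {μ : ι → Measure (ℤ → A)} [IsFiniteMeasure (Measure.sum μ)]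
    (hμ : ∀ i, HarmonicallyMixing (μ i)) : HarmonicallyMixing (Measure.sum μ) := by
  simp only [harmonicallyMixing_iff_tendsto] at hμ ⊢
  have hfin : ∀ i, IsFiniteMeasure (μ i) := fun i => isFiniteMeasure_of_le _ (Measure.le_sum μ i)
  have hsummable : Summable fun i => (μ i).real Set.univ := by
    refine ENNReal.summable_toReal ?_
    rw [← Measure.sum_apply _ MeasurableSet.univ]
    exact measure_ne_top _ _
  have htsum := tendsto_tsum_of_dominated_convergence hsummable hμ (by
    filter_upwards [eventually_finite_mulSupport_highRank] with χ hχ i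
    simpa using norm_integral_le_of_norm_le_const (.of_forall (norm_charEval_le_one hχ)))
  rw [tsum_zero] at htsum
  refine htsum.congr' ?_
  filter_upwards [eventually_finite_mulSupport_highRank] with χ hχ
  exact (hasSum_integral_measure (integrable_charEval hχ _)).tsum_eq

theorem restrict_eval_preimage [IsFiniteMeasure μ] (hμ : HarmonicallyMixing μ) (i : ℤ)
    (s : Set A) : HarmonicallyMixing (μ.restrict (eval i ⁻¹' s)) := by
  classical
  have := Fintype.ofFinite (AddChar A ℂ)
  rw [harmonicallyMixing_iff_tendsto] at hμ ⊢
  obtain ⟨c, hc⟩ := exists_indicator_charEval_eq_sum i s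
  have hfin := finite_mulSupport_mulSingle (A := A) i
  have hterm : ∀ ψ, Tendsto (fun χ => c ψ * ∫ x, charEval (χ * Pi.mulSingle i ψ) x ∂μ)
      (highRank A) (𝓝 0) := fun ψ => by
    simpa using (hμ.comp (tendsto_mul_right_highRank (hfin ψ))).const_mul (c ψ)
  have hsum := tendsto_finsetSum Finset.univ fun ψ _ => hterm ψ
  rw [Finset.sum_const_zero] at hsum
  refine hsum.congr' ?_
  filter_upwards [eventually_finite_mulSupport_highRank] with χ hχ
  have hint : ∀ ψ, Integrable (charEval (χ * Pi.mulSingle i ψ)) μ := fun ψ =>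
    integrable_charEval ((hχ.union (hfin ψ)).subset (mulSupport_mul χ _)) μ
  rw [← integral_indicator (measurable_pi_apply i .of_discrete), funext (hc χ hχ),
    integral_finsetSum _ fun ψ _ => (hint ψ).const_mul (c ψ)]
  simp only [integral_const_mul]

theorem restrict_pi [IsFiniteMeasure μ] (hμ : HarmonicallyMixing μ) (s : Finset ℤ)
    (t : ℤ → Set A) : HarmonicallyMixing (μ.restrict ((s : Set ℤ).pi t)) := by
  induction s using Finset.induction_on with
  | empty => simpa using hμ
  | insert i s _ ih =>
    rw [Finset.coe_insert, Set.insert_pi,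
      ← Measure.restrict_restrict (measurable_pi_apply i .of_discrete)]
    exact ih.restrict_eval_preimage i (t i)

theorem restrict [IsFiniteMeasure μ] (hμ : HarmonicallyMixing μ) {s : Set (ℤ → A)}
    (hs : MeasurableSet s) : HarmonicallyMixing (μ.restrict s) := by
  induction s, hs using MeasurableSpace.induction_on_inter generateFrom_squareCylinders.symm
    (isPiSystem_squareCylinders (fun _ => MeasurableSpace.isPiSystem_measurableSet) (by simp)) with
  | empty => simpa using HarmonicallyMixing.zero
  | basic s hs =>
    obtain ⟨I, t, -, rfl⟩ := hs
    exact hμ.restrict_pi I t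
  | compl s hs ih => exact ih.of_add_left (by rwa [Measure.restrict_add_restrict_compl hs])
  | iUnion s hdisj hs ih =>
    have hsum := Measure.restrict_iUnion (μ := μ) hdisj hs
    have : IsFiniteMeasure (Measure.sum fun n => μ.restrict (s n)) := hsum ▸ inferInstance
    exact hsum ▸ HarmonicallyMixing.sum ih

theorem withDensity_simpleFunc [IsFiniteMeasure μ] (hμ : HarmonicallyMixing μ)
    (f : SimpleFunc (ℤ → A) ℝ≥0) : HarmonicallyMixing (μ.withDensity fun x => f x) := by
  suffices h : IsFiniteMeasure (μ.withDensity fun x => f x) ∧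
    HarmonicallyMixing (μ.withDensity fun x => f x) from h.2
  induction f using SimpleFunc.induction with
  | @const c s hs =>
    have hdensity : (fun x => (SimpleFunc.piecewise s hs (SimpleFunc.const _ c)
        (SimpleFunc.const _ 0) x : ℝ≥0∞)) = s.indicator fun _ => (c : ℝ≥0∞) := by
      ext x
      by_cases hx : x ∈ s <;> simp [hx]
    rw [hdensity, withDensity_indicator hs, withDensity_const]
    exact ⟨inferInstanceAs (IsFiniteMeasure (c • μ.restrict s)), (hμ.restrict hs).smul c⟩
  | @add f g _ ihf ihg =>
    obtain ⟨⟨_, hf⟩, _, hg⟩ := And.intro ihf ihg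
    have hdensity : μ.withDensity (fun x => (f + g) x)
        = μ.withDensity (fun x => f x) + μ.withDensity (fun x => g x) := by
      rw [← withDensity_add_left f.measurable.coe_nnreal_ennreal]
      congr with x
    rw [hdensity]
    exact ⟨inferInstance, hf.add hg⟩

theorem of_absolutelyContinuous [IsFiniteMeasure μ] [IsFiniteMeasure ν]
    (hμ : HarmonicallyMixing μ) (hνμ : ν ≪ μ) : HarmonicallyMixing ν := by
  have hν : ν = Measure.sum fun n =>
      μ.withDensity fun x => SimpleFunc.eapproxDiff (ν.rnDeriv μ) n x := by
    rw [← withDensity_tsum fun n => (SimpleFunc.measurable _).coe_nnreal_ennreal]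
    conv_lhs => rw [← Measure.withDensity_rnDeriv_eq ν μ hνμ]
    congr with x
    rw [ENNReal.tsum_apply, SimpleFunc.tsum_eapproxDiff _ (Measure.measurable_rnDeriv ν μ)]
  have : IsFiniteMeasure (Measure.sum fun n =>
      μ.withDensity fun x => SimpleFunc.eapproxDiff (ν.rnDeriv μ) n x) := hν ▸ inferInstance
  exact hν ▸ HarmonicallyMixing.sum fun n => hμ.withDensity_simpleFunc _

end HarmonicallyMixing

section TransferOperator

variable {A : Type*} [Fintype A]

theorem norm_sum_ofReal_mul_le {w : A → ℝ} (hw : ∀ b, 0 ≤ w b) (z : A → ℂ) :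
    ‖∑ b, (w b : ℂ) * z b‖ ≤ (∑ b, w b) * ‖z‖ := by
  rw [Finset.sum_mul]
  refine norm_sum_le_of_le _ fun b _ => ?_
  rw [norm_mul, Complex.norm_of_nonneg (hw b)]
  exact mul_le_mul_of_nonneg_left (norm_le_pi_norm z b) (hw b)

theorem norm_sum_ofReal_mul_sub_le {q : ℝ} {w : A → ℝ} (hq : ∀ b, q ≤ w b) (hw : ∑ b, w b = 1)
    (z : A → ℂ) : ‖∑ b, (w b : ℂ) * z b - q * ∑ b, z b‖ ≤ (1 - Fintype.card A * q) * ‖z‖ := by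
  calc ‖∑ b, (w b : ℂ) * z b - q * ∑ b, z b‖ = ‖∑ b, ((w b - q : ℝ) : ℂ) * z b‖ := by
        simp only [Complex.ofReal_sub, sub_mul, Finset.sum_sub_distrib, Finset.mul_sum]
    _ ≤ (∑ b, (w b - q)) * ‖z‖ := norm_sum_ofReal_mul_le (fun b => sub_nonneg.2 (hq b)) z
    _ = (1 - Fintype.card A * q) * ‖z‖ := by simp [Finset.sum_sub_distrib, hw]

/-- The conditional expectation, as a function of the present state, of `h b * z b` at the next
state `b` of a Markov chain with transition matrix `Q`. -/
def transferOp (Q : A → A → ℝ) (h z : A → ℂ) : A → ℂ :=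
  fun a => ∑ b, (Q a b : ℂ) * (h b * z b)

variable {Q : A → A → ℝ}

theorem norm_transferOp_le (hQ : ∀ a b, 0 ≤ Q a b) (hQrow : ∀ a, ∑ b, Q a b = 1) {h : A → ℂ}
    (hh : ‖h‖ ≤ 1) (z : A → ℂ) : ‖transferOp Q h z‖ ≤ ‖z‖ := by
  refine (pi_norm_le_iff_of_nonneg (norm_nonneg z)).2 fun a => ?_
  calc ‖∑ b, (Q a b : ℂ) * (h * z) b‖ ≤ (∑ b, Q a b) * ‖h * z‖ := norm_sum_ofReal_mul_le (hQ a) _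
    _ ≤ 1 * (‖h‖ * ‖z‖) := by
        rw [hQrow]
        gcongr
        exact norm_mul_le h z
    _ ≤ ‖z‖ := by
        rw [one_mul]
        exact mul_le_of_le_one_left (norm_nonneg z) hh

theorem card_mul_le_one {q : ℝ} (hq : ∀ a b, q ≤ Q a b) (hQrow : ∀ a, ∑ b, Q a b = 1) :
    Fintype.card A * q ≤ 1 := by
  rcases isEmpty_or_nonempty A with _ | ⟨⟨a⟩⟩
  · simp
  · rw [← hQrow a, ← nsmul_eq_mul]
    exact Finset.card_nsmul_le_sum _ _ _ fun b _ => hq a b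

theorem norm_transferOp_sub_le {q : ℝ} (hq : ∀ a b, q ≤ Q a b) (hQrow : ∀ a, ∑ b, Q a b = 1)
    {h : A → ℂ} (hh : ‖h‖ ≤ 1) (z : A → ℂ) (a : A) :
    ‖transferOp Q h z a - q * ∑ b, h b * z b‖ ≤ (1 - Fintype.card A * q) * ‖z‖ := by
  have hκ := sub_nonneg.2 (card_mul_le_one hq hQrow)
  refine (norm_sum_ofReal_mul_sub_le (hq a) (hQrow a) (h * z)).trans ?_
  gcongr
  exact (norm_mul_le h z).trans (mul_le_of_le_one_left (norm_nonneg z) hh)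

theorem norm_transferOp_transferOp_le {q : ℝ} (hq0 : 0 ≤ q) (hq : ∀ a b, q ≤ Q a b)
    (hQrow : ∀ a, ∑ b, Q a b = 1) {h g : A → ℂ} (hh : ‖h‖ ≤ 1) (hsum : ∑ b, h b = 0)
    (hg : ‖g‖ ≤ 1) (z : A → ℂ) :
    ‖transferOp Q h (transferOp Q g z)‖ ≤ (1 - (Fintype.card A * q) ^ 2) * ‖z‖ := by
  set κ : ℝ := Fintype.card A * q
  have hκ0 : 0 ≤ κ := by positivity
  have hκ : 0 ≤ 1 - κ := sub_nonneg.2 (card_mul_le_one hq hQrow)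
  set m : ℂ := q * ∑ c, g c * z c
  set v : A → ℂ := fun b => transferOp Q g z b - m
  have hm : ‖m‖ ≤ κ * ‖z‖ := by
    have hconst := norm_sum_ofReal_mul_le (fun _ : A => hq0) (g * z)
    rw [← Finset.mul_sum, Finset.sum_const, Finset.card_univ, nsmul_eq_mul] at hconst
    refine hconst.trans ?_
    gcongr
    exact (norm_mul_le g z).trans (mul_le_of_le_one_left (norm_nonneg z) hg)
  have hv : ‖v‖ ≤ (1 - κ) * ‖z‖ :=
    (pi_norm_le_iff_of_nonneg (by positivity)).2 (norm_transferOp_sub_le hq hQrow hg z)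
  refine (pi_norm_le_iff_of_nonneg (mul_nonneg (by nlinarith) (norm_nonneg z))).2 fun a => ?_
  have hmean : ‖∑ b, (Q a b : ℂ) * h b‖ ≤ 1 - κ := by
    have ha := norm_sum_ofReal_mul_sub_le (hq a) (hQrow a) h
    rw [hsum, mul_zero, sub_zero] at ha
    exact ha.trans (mul_le_of_le_one_right hκ hh)
  have hsplit : transferOp Q h (transferOp Q g z) a
      = (∑ b, (Q a b : ℂ) * h b) * m + transferOp Q h v a := by
    simp only [transferOp, v, Finset.sum_mul, ← Finset.sum_add_distrib]
    exact Finset.sum_congr rfl fun b _ => by ring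
  calc ‖transferOp Q h (transferOp Q g z) a‖
      ≤ ‖∑ b, (Q a b : ℂ) * h b‖ * ‖m‖ + ‖transferOp Q h v a‖ := by
        rw [hsplit, ← norm_mul]
        exact norm_add_le _ _
    _ ≤ (1 - κ) * (κ * ‖z‖) + (1 - κ) * ‖z‖ := by
        gcongr
        exact (norm_le_pi_norm _ a).trans
          ((norm_transferOp_le (fun a b => hq0.trans (hq a b)) hQrow hh v).trans hv)
    _ = (1 - κ ^ 2) * ‖z‖ := by ring

theorem norm_foldr_transferOp_le {q : ℝ} (hq0 : 0 ≤ q) (hq : ∀ a b, q ≤ Q a b)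
    (hQrow : ∀ a, ∑ b, Q a b = 1) : ∀ {l : List (A → ℂ)}, (∀ h ∈ l, ‖h‖ ≤ 1) →
      ‖l.foldr (transferOp Q) 1‖
        ≤ (1 - (Fintype.card A * q) ^ 2) ^ (l.countP (fun h => ∑ b, h b = 0) / 2)
  | [], _ => (pi_norm_const_le (1 : ℂ)).trans_eq (by simp)
  | [h], hl => by
    have hle : [h].countP (fun h => ∑ b, h b = 0) ≤ 1 := List.countP_le_length
    rw [Nat.div_eq_of_lt (by lia), pow_zero]
    exact (norm_transferOp_le (fun a b => hq0.trans (hq a b)) hQrow (hl h (by simp)) 1).trans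
      ((pi_norm_const_le (1 : ℂ)).trans_eq norm_one)
  | h :: g :: l, hl => by
    simp only [List.forall_mem_cons] at hl
    obtain ⟨hh, hg, hl⟩ := hl
    have hκ := card_mul_le_one hq hQrow
    have hρ0 : 0 ≤ 1 - (Fintype.card A * q) ^ 2 := sub_nonneg.2 (pow_le_one₀ (by positivity) hκ)
    have hρ1 : 1 - (Fintype.card A * q) ^ 2 ≤ 1 := sub_le_self _ (by positivity)
    by_cases hsum : ∑ b, h b = 0
    · calc ‖transferOp Q h (transferOp Q g (l.foldr (transferOp Q) 1))‖
          ≤ (1 - (Fintype.card A * q) ^ 2) * ‖l.foldr (transferOp Q) 1‖ :=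
            norm_transferOp_transferOp_le hq0 hq hQrow hh hsum hg _
        _ ≤ (1 - (Fintype.card A * q) ^ 2) *
            (1 - (Fintype.card A * q) ^ 2) ^ (l.countP (fun h => ∑ b, h b = 0) / 2) :=
            mul_le_mul_of_nonneg_left (norm_foldr_transferOp_le hq0 hq hQrow hl) hρ0
        _ ≤ (1 - (Fintype.card A * q) ^ 2) ^
            ((h :: g :: l).countP (fun h => ∑ b, h b = 0) / 2) := by
            rw [← pow_succ']
            refine pow_le_pow_of_le_one hρ0 hρ1 ?_
            simp only [List.countP_cons]
            split_ifs <;> lia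
    · rw [List.countP_cons_of_neg (by simpa using hsum)]
      exact (norm_transferOp_le (fun a b => hq0.trans (hq a b)) hQrow hh _).trans
        (norm_foldr_transferOp_le hq0 hq hQrow (List.forall_mem_cons.2 ⟨hg, hl⟩))

theorem sum_prod_path_eq_foldr_transferOp {n : ℕ} (h : Fin n → A → ℂ) (a : A) :
    ∑ w : Fin n → A, ∏ i, (Q (Fin.cons (α := fun _ => A) a w i.castSucc) (w i) : ℂ) * h i (w i)
      = (List.ofFn h).foldr (transferOp Q) 1 a := by
  induction n generalizing a with
  | zero => simp
  | succ n ih =>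
    rw [← (Fin.consEquiv fun _ => A).sum_comp, Fintype.sum_prod_type]
    simp only [List.ofFn_succ, List.foldr_cons, transferOp, ← ih]
    refine Finset.sum_congr rfl fun b _ => ?_
    simp [Fin.prod_univ_succ, Finset.mul_sum, mul_assoc, Fin.consEquiv]

end TransferOperator

/-- The enumeration `i ↦ k + (i + 1)` of the window `k + 1, …, k + n` of `ℤ`. -/
def windowEmbedding (k : ℤ) (n : ℕ) : Fin n ↪ ℤ where
  toFun i := k + (i.succ : ℕ)
  inj' i j hij := by simpa [Fin.ext_iff] using hij

theorem exists_subset_range_windowEmbedding {s : Set ℤ} (hs : s.Finite) :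
    ∃ k n, s ⊆ Set.range (windowEmbedding k n) := by
  obtain ⟨a, ha⟩ := hs.bddBelow
  obtain ⟨b, hb⟩ := hs.bddAbove
  refine ⟨a - 1, (b + 1 - a).toNat, fun i hi => ⟨⟨(i - a).toNat, ?_⟩, ?_⟩⟩
  · have := ha hi
    have := hb hi
    lia
  · have := ha hi
    change a - 1 + ((i - a).toNat + 1 : ℕ) = i
    lia

theorem countP_ofFn {α : Type*} {n : ℕ} (f : Fin n → α) (P : α → Prop) [DecidablePred P] :
    (List.ofFn f).countP (fun a => P a) = {i | P (f i)}.ncard := by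
  rw [← Multiset.coe_countP, ← Fin.univ_val_map, Multiset.countP_map]
  simp [Set.ncard_eq_toFinset_card', Finset.card_def]

theorem countP_ofFn_sum_eq_zero {A : Type*} [AddCommGroup A] [Fintype A] {χ : ℤ → AddChar A ℂ}
    {n : ℕ} {e : Fin n ↪ ℤ} (he : mulSupport χ ⊆ Set.range e) :
    (List.ofFn fun i => ⇑(χ (e i))).countP (fun h => ∑ b, h b = 0) = (mulSupport χ).ncard := by
  rw [countP_ofFn _ fun h : A → ℂ => ∑ b, h b = 0, ← Set.image_preimage_eq_of_subset he,
    Set.ncard_image_of_injective _ e.injective]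
  congr with i
  exact AddChar.sum_eq_zero_iff_ne_zero

section MarkovMeasure

variable {A : Type*} [MeasurableSpace A]

/-- `μ` is the law on `A^ℤ` of the stationary Markov chain with one-time distribution `p` and
transition matrix `Q`, specified through the words seen on the intervals of `ℤ`. -/
def IsMarkovMeasure (p : A → ℝ) (Q : A → A → ℝ) (μ : Measure (ℤ → A)) : Prop :=
  ∀ (k : ℤ) (n : ℕ) (f : ℕ → A),
    μ {x | ∀ i : ℕ, i ≤ n → x (k + i) = f i}
      = ENNReal.ofReal (p (f 0) * ∏ i ∈ Finset.range n, Q (f i) (f (i + 1)))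

namespace IsMarkovMeasure

variable {p : A → ℝ} {Q : A → A → ℝ} {μ : Measure (ℤ → A)}

theorem measure_eval_eq (hμ : IsMarkovMeasure p Q μ) (i : ℤ) (a : A) :
    μ {x | x i = a} = ENNReal.ofReal (p a) := by
  simpa using hμ i 0 fun _ => a

theorem measure_window_eq (hμ : IsMarkovMeasure p Q μ) (k : ℤ) {n : ℕ} (w : Fin (n + 1) → A) :
    μ {x | (fun i : Fin (n + 1) => x (k + (i : ℕ))) = w}
      = ENNReal.ofReal (p (w 0) * ∏ i : Fin n, Q (w i.castSucc) (w i.succ)) := by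
  have hword := hμ k n fun i => w (Fin.ofNat (n + 1) i)
  rw [← Fin.prod_univ_eq_prod_range
    (fun i => Q (w (Fin.ofNat (n + 1) i)) (w (Fin.ofNat (n + 1) (i + 1))))] at hword
  have hcast (i : Fin n) : Fin.ofNat (n + 1) i = i.castSucc := Fin.ofNat_val_eq_self i.castSucc
  have hsucc (i : Fin n) : Fin.ofNat (n + 1) (i + 1) = i.succ := Fin.ofNat_val_eq_self i.succ
  simp only [hcast, hsucc] at hword
  refine (congrArg μ (Set.ext fun x => ?_)).trans hword
  simp only [Set.mem_ofPred_eq, funext_iff]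
  refine ⟨fun hx i hi => ?_, fun hx i => ?_⟩
  · simpa [Nat.mod_eq_of_lt (Nat.lt_succ_of_le hi)] using hx (Fin.ofNat (n + 1) i)
  · simpa using hx i (Nat.le_of_lt_succ i.isLt)

variable [Fintype A] [DiscreteMeasurableSpace A]

theorem integral_window [IsFiniteMeasure μ] (hμ : IsMarkovMeasure p Q μ) (hp : ∀ a, 0 ≤ p a)
    (hQ : ∀ a b, 0 ≤ Q a b) (k : ℤ) {n : ℕ} (G : (Fin (n + 1) → A) → ℂ) :
    ∫ x, G (fun i => x (k + (i : ℕ))) ∂μ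
      = ∑ w, ((p (w 0) * ∏ i : Fin n, Q (w i.castSucc) (w i.succ) : ℝ) : ℂ) * G w := by
  have hX : Measurable fun (x : ℤ → A) (i : Fin (n + 1)) => x (k + (i : ℕ)) := by fun_prop
  rw [← integral_map hX.aemeasurable Measurable.of_discrete.aestronglyMeasurable,
    integral_fintype .of_finite]
  refine Finset.sum_congr rfl fun w _ => ?_
  have hw : 0 ≤ p (w 0) * ∏ i : Fin n, Q (w i.castSucc) (w i.succ) :=
    mul_nonneg (hp _) (Finset.prod_nonneg fun i _ => hQ _ _)
  rw [map_measureReal_apply hX (measurableSet_singleton w), Complex.real_smul, measureReal_def]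
  congr 2
  exact (congrArg ENNReal.toReal (hμ.measure_window_eq k w)).trans (ENNReal.toReal_ofReal hw)

theorem integral_prod_window [IsFiniteMeasure μ] (hμ : IsMarkovMeasure p Q μ) (hp : ∀ a, 0 ≤ p a)
    (hQ : ∀ a b, 0 ≤ Q a b) (k : ℤ) {n : ℕ} (h : Fin n → A → ℂ) :
    ∫ x, ∏ i : Fin n, h i (x (k + (i.succ : ℕ))) ∂μ
      = ∑ a, (p a : ℂ) * (List.ofFn h).foldr (transferOp Q) 1 a := by
  rw [hμ.integral_window hp hQ k fun w => ∏ i : Fin n, h i (w i.succ),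
    ← (Fin.consEquiv fun _ => A).sum_comp, Fintype.sum_prod_type]
  refine Finset.sum_congr rfl fun a _ => ?_
  rw [← sum_prod_path_eq_foldr_transferOp, Finset.mul_sum]
  refine Finset.sum_congr rfl fun w _ => ?_
  simp [Fin.consEquiv, Finset.prod_mul_distrib, mul_assoc]

theorem norm_integral_charEval_le [AddCommGroup A] [IsFiniteMeasure μ] (hμ : IsMarkovMeasure p Q μ)
    (hp : ∀ a, 0 ≤ p a) (hp1 : ∑ a, p a = 1) {q : ℝ} (hq0 : 0 ≤ q) (hq : ∀ a b, q ≤ Q a b)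
    (hQrow : ∀ a, ∑ b, Q a b = 1) {χ : ℤ → AddChar A ℂ} (hχ : (mulSupport χ).Finite) :
    ‖∫ x, charEval χ x ∂μ‖
      ≤ (1 - (Fintype.card A * q) ^ 2) ^ ((mulSupport χ).ncard / 2) := by
  obtain ⟨k, n, hkn⟩ := exists_subset_range_windowEmbedding hχ
  have hchar (x : ℤ → A) := charEval_eq_prod_univ hkn x
  calc ‖∫ x, charEval χ x ∂μ‖
      = ‖∑ a, (p a : ℂ) * (List.ofFn fun i => ⇑(χ (windowEmbedding k n i))).foldr
          (transferOp Q) 1 a‖ := by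
        rw [← hμ.integral_prod_window hp (fun a b => hq0.trans (hq a b)) k]
        simp only [hchar]
        rfl
    _ ≤ (∑ a, p a) * ‖(List.ofFn fun i => ⇑(χ (windowEmbedding k n i))).foldr
          (transferOp Q) 1‖ := norm_sum_ofReal_mul_le hp _
    _ ≤ (1 - (Fintype.card A * q) ^ 2) ^ ((mulSupport χ).ncard / 2) := by
        rw [hp1, one_mul, ← countP_ofFn_sum_eq_zero hkn]
        refine norm_foldr_transferOp_le hq0 hq hQrow (List.forall_mem_ofFn_iff.2 fun i => ?_)
        exact (pi_norm_le_iff_of_nonneg zero_le_one).2 fun a => (AddChar.norm_apply _ a).le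

protected theorem harmonicallyMixing [AddCommGroup A] [IsFiniteMeasure μ]
    (hμ : IsMarkovMeasure p Q μ) (hp : ∀ a, 0 ≤ p a) (hp1 : ∑ a, p a = 1)
    (hQpos : ∀ a b, 0 < Q a b) (hQrow : ∀ a, ∑ b, Q a b = 1) : HarmonicallyMixing μ := by
  obtain ⟨⟨a, b⟩, hab⟩ := Finite.exists_min fun ab : A × A => Q ab.1 ab.2
  have hq : ∀ c d, Q a b ≤ Q c d := fun c d => hab (c, d)
  have hκ0 : 0 < Fintype.card A * Q a b := mul_pos (mod_cast Fintype.card_pos) (hQpos a b)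
  have hκ1 := card_mul_le_one hq hQrow
  have hpow : Tendsto (fun χ : ℤ → AddChar A ℂ =>
      (1 - (Fintype.card A * Q a b) ^ 2) ^ ((mulSupport χ).ncard / 2)) (highRank A) (𝓝 0) :=
    (tendsto_pow_atTop_nhds_zero_of_lt_one (sub_nonneg.2 (pow_le_one₀ hκ0.le hκ1))
      (sub_lt_self _ (by positivity))).comp
      ((Nat.tendsto_div_const_atTop two_ne_zero).comp tendsto_comap)
  rw [harmonicallyMixing_iff_tendsto]
  refine squeeze_zero_norm' ?_ hpow
  filter_upwards [eventually_finite_mulSupport_highRank] with χ hχ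
  exact hμ.norm_integral_charEval_le hp hp1 (hQpos a b).le hq hQrow hχ

end IsMarkovMeasure

end MarkovMeasure

section Discreteness

variable {ι A : Type*} [MeasurableSpace A]

theorem measure_eval_preimage_measurableAtom (μ : Measure (ι → A)) (i : ι) (a : A) :
    μ (eval i ⁻¹' measurableAtom a) = μ {x | x i = a} := by
  classical
  have hsub : {x : ι → A | x i = a} ⊆ eval i ⁻¹' measurableAtom a := by
    rintro x rfl
    exact mem_measurableAtom_self (x i)
  refine le_antisymm ?_ (measure_mono hsub)
  set T := toMeasurable μ {x | x i = a}
  have hT : MeasurableSet T := measurableSet_toMeasurable _ _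
  refine (measure_mono fun x hx => ?_).trans (measure_toMeasurable _).le
  have hsection : MeasurableSet {b | update x i b ∈ T} := measurable_update x hT
  have ha : update x i a ∈ T := subset_toMeasurable _ _ (by simp)
  simpa using mem_of_mem_measurableAtom hx hsection ha

theorem measurableSingletonClass_of_sum_measure_eval_le [Fintype A] {μ : Measure (ι → A)}
    [IsFiniteMeasure μ] {i : ι} (hpos : ∀ a, μ {x | x i = a} ≠ 0)
    (hsum : ∑ a, μ {x | x i = a} ≤ μ Set.univ) : MeasurableSingletonClass A := by
  classical
  refine ⟨fun a => ?_⟩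
  suffices hatom : measurableAtom a = {a} from
    hatom ▸ MeasurableSet.measurableAtom_of_countable a
  refine Set.Subset.antisymm (fun b hb => ?_) (by simp)
  by_contra hba
  have hcover : (Set.univ : Set (ι → A)) ⊆
      ⋃ c ∈ Finset.univ.erase b, eval i ⁻¹' measurableAtom c := fun x _ => by
    simp only [Finset.mem_erase, Finset.mem_univ, and_true, Set.mem_iUnion, exists_prop]
    rcases eq_or_ne (x i) b with hxb | hxb
    · exact ⟨a, Ne.symm hba, by simpa [hxb] using hb⟩
    · exact ⟨x i, hxb, mem_measurableAtom_self (x i)⟩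
  have hlt : ∑ c ∈ Finset.univ.erase b, μ {x | x i = c} < ∑ c, μ {x | x i = c} := by
    rw [← Finset.sum_erase_add _ _ (Finset.mem_univ b)]
    exact ENNReal.lt_add_right (ENNReal.sum_ne_top.2 fun c _ => measure_ne_top _ _) (hpos b)
  refine (((measure_mono hcover).trans (measure_biUnion_finset_le _ _)).trans_lt ?_).not_ge hsum
  simpa only [measure_eval_preimage_measurableAtom] using hlt

end Discreteness

theorem pos_of_stationary {A : Type*} [Fintype A] {p : A → ℝ} {Q : A → A → ℝ} (hp : ∀ a, 0 ≤ p a)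
    (hp1 : ∑ a, p a = 1) (hQpos : ∀ a b, 0 < Q a b) (hstat : ∀ b, ∑ a, p a * Q a b = p b) (b : A) :
    0 < p b := by
  obtain ⟨a, -, ha⟩ := Finset.exists_ne_zero_of_sum_ne_zero (hp1.trans_ne one_ne_zero)
  rw [← hstat b]
  exact Finset.sum_pos' (fun a _ => mul_nonneg (hp a) (hQpos a b).le)
    ⟨a, Finset.mem_univ a, mul_pos ((hp a).lt_of_ne' ha) (hQpos a b)⟩

/-- If `μ` is a stationary Markov measure on `A^ℤ` with strictly positive
transition matrix, then any probability measure `ν` absolutely continuous with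
respect to `μ` is harmonically mixing. -/
theorem absolutelyContinuous_markov_harmonically_mixing (A : Type*) [AddCommGroup A]
    [Fintype A] [MeasurableSpace A]
    (Q : A → A → ℝ) (hQpos : ∀ a b, 0 < Q a b) (hQrow : ∀ a, ∑ b, Q a b = 1)
    (νv : A → ℝ) (hν0 : ∀ a, 0 ≤ νv a) (hν1 : ∑ a, νv a = 1)
    (hstat : ∀ b, ∑ a, νv a * Q a b = νv b)
    (μ : Measure (ℤ → A)) [IsProbabilityMeasure μ]
    (hμ : ∀ (k : ℤ) (n : ℕ) (f : ℕ → A),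
      μ {x | ∀ i : ℕ, i ≤ n → x (k + i) = f i}
        = ENNReal.ofReal (νv (f 0) * ∏ i ∈ Finset.range n, Q (f i) (f (i + 1))))
    (ν : Measure (ℤ → A)) [IsProbabilityMeasure ν] (hac : ν ≪ μ) :
    HarmonicallyMixing ν := by
  have hmarkov : IsMarkovMeasure νv Q μ := hμ
  have hpos : ∀ a, 0 < νv a := pos_of_stationary hν0 hν1 hQpos hstat
  have : MeasurableSingletonClass A := by
    refine measurableSingletonClass_of_sum_measure_eval_le (μ := μ) (i := 0) (fun a => ?_) ?_
    · simpa [hmarkov.measure_eval_eq] using hpos a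
    · simp_rw [hmarkov.measure_eval_eq, ← ENNReal.ofReal_sum_of_nonneg fun a _ => hν0 a]
      simp [hν1]
  exact (hmarkov.harmonicallyMixing hν0 hν1 hQpos hQrow).of_absolutelyContinuous hac
end

section
/- Let p be prime and F a nontrivial linear cellular automaton on (ℤ/p)^{ℤ^D}, i.e., F is a polynomial in the shift maps with at least two nonzero coefficients. Then F is diffusive in density: for every nontrivial character χ of (ℤ/p)^{ℤ^D}, there is a subset J ⊆ ℕ of Cesàro density 1 along which rank(χ ∘ F^j) → ∞. -/
open Filter

/-- The character `γ^k` of `ℤ/p`. -/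
noncomputable def zmodChar (p : ℕ) (k a : ZMod p) : ℂ :=
  Complex.exp (2 * Real.pi * Complex.I * ((k.val : ℂ) * (a.val : ℂ)) / (p : ℂ))

/-- Evaluation of the character of `(ℤ/p)^{ℤ^D}` with (finitely supported)
coefficient system `χ`; its rank is `χ.support.card`. -/
noncomputable def prodChar {p D : ℕ} (χ : (Fin D → ℤ) →₀ ZMod p)
    (a : (Fin D → ℤ) → ZMod p) : ℂ :=
  ∏ q ∈ χ.support, zmodChar p (χ q) (a q)

/-- A set `J ⊆ ℕ` has Cesàro density one. -/
def HasDensityOne (J : Set ℕ) : Prop :=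
  Tendsto (fun N => ((J ∩ Set.Iio N).ncard : ℝ) / N) atTop (nhds 1)

/-!
Identify the coefficient systems of characters with elements of the group ring of `ℤ^D` over `ℤ/p`;
then `χ ∘ F^j` corresponds to the product `χ * f ^ j`, and its rank is the number of terms of that
product. A homomorphism `ℤ^D → ℤ` that is injective on the supports of `χ` and `f` can only merge
terms, so it suffices to count the terms of `g * f ^ j` for polynomials in one variable of degree
at most `d`.

Let `Q = p ^ s > 2 * d` and `j = c + Q * j'` with `c < Q`. By Frobenius,
`g * f ^ j = (g * f ^ c) * f' ^ j' (X ^ Q)`, where `f'` has the same support as `f`. Sorting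
exponents modulo `Q` gives a sum over residues `r` of the number of terms of `g_r * f' ^ j'`, with
`g_r` the section of `g * f ^ c` along `r`, and `deg g_r ≤ d` again since
`deg (g * f ^ c) ≤ Q * d`. At least one `g_r` is nonzero, and for `c = 1` at least two are, because
`g * f` has at least two terms and degree below `Q`. Hence `g * f ^ j` has at least `2 ^ m` terms,
where `m` is the number of base-`Q` digits of `j` equal to `1`.

The mean of `2 ^ (-m)` over `j < Q ^ n` is `(1 - 1 / (2 * Q)) ^ n → 0`, so `m` tends to infinity
along a set of density one.
-/

open Finset Topology

section Density

lemma hasDensityOne_of_tendsto_compl {J : Set ℕ}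
    (h : Tendsto (fun N : ℕ => ((Jᶜ ∩ Set.Iio N).ncard : ℝ) / N) atTop (𝓝 0)) :
    HasDensityOne J := by
  have hsub : Tendsto (fun N : ℕ => 1 - ((Jᶜ ∩ Set.Iio N).ncard : ℝ) / N) atTop (𝓝 1) := by
    simpa using h.const_sub 1
  refine hsub.congr' ?_
  filter_upwards [eventually_gt_atTop 0] with N hN
  have hsplit : (Set.Iio N ∩ J).ncard + (Set.Iio N \ J).ncard = N := by
    rw [Set.ncard_inter_add_ncard_sdiff_eq_ncard _ _ (Set.finite_Iio N),
      Set.ncard_eq_toFinset_card']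
    simp
  have hcast : ((J ∩ Set.Iio N).ncard : ℝ) + (Jᶜ ∩ Set.Iio N).ncard = N := by
    rw [Set.inter_comm J, Set.inter_comm Jᶜ, ← Set.sdiff_eq]
    exact_mod_cast hsplit
  field_simp
  linarith

lemma exists_antitone_le_tendsto {m : ℕ → ℝ} {a : ℝ} (hm : Tendsto m atTop (𝓝 a)) :
    ∃ e : ℕ → ℝ, Antitone e ∧ m ≤ e ∧ Tendsto e atTop (𝓝 a) := by
  have hbdd : ∀ N, BddAbove (Set.range fun k => m (N + k)) := fun N =>
    hm.bddAbove_range.mono (Set.range_comp_subset_range _ m)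
  have hle : m ≤ fun N => ⨆ k, m (N + k) := fun N => le_ciSup (hbdd N) 0
  refine ⟨fun N => ⨆ k, m (N + k), fun M N hMN => ciSup_le fun k => ?_, hle, ?_⟩
  · obtain ⟨i, rfl⟩ := Nat.exists_eq_add_of_le hMN
    simpa only [add_assoc] using le_ciSup (hbdd M) (i + k)
  · refine tendsto_order.2 ⟨fun b hb => ?_, fun b hb => ?_⟩
    · filter_upwards [hm.eventually_const_lt hb] with N hN using hN.trans_le (hle N)
    · obtain ⟨c, hac, hcb⟩ := exists_between hb
      obtain ⟨N₀, hN₀⟩ := eventually_atTop.1 (hm.eventually_le_const hac)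
      filter_upwards [eventually_ge_atTop N₀] with N hN
      exact (ciSup_le fun k => hN₀ _ (hN.trans (N.le_add_right k))).trans_lt hcb

lemma ncard_setOf_lt_mul_le_sum {u δ : ℕ → ℝ} (hu : ∀ j, 0 ≤ u j) (hδ : Antitone δ) (N : ℕ) :
    (({j | δ j < u j} ∩ Set.Iio N).ncard : ℝ) * δ N ≤ ∑ j ∈ range N, u j := by
  classical
  have hset : {j | δ j < u j} ∩ Set.Iio N = ({j ∈ range N | δ j < u j} : Finset ℕ) := by
    ext j
    simp [and_comm]
  rw [hset, Set.ncard_coe_finset, ← nsmul_eq_mul]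
  calc #{j ∈ range N | δ j < u j} • δ N ≤ ∑ j ∈ range N with δ j < u j, u j := by
        refine card_nsmul_le_sum _ _ _ fun j hj => ?_
        rw [mem_filter, mem_range] at hj
        exact (hδ hj.1.le).trans hj.2.le
    _ ≤ ∑ j ∈ range N, u j :=
        sum_le_sum_of_subset_of_nonneg (filter_subset _ _) fun j _ _ => hu j

/-- The **Koopman–von Neumann lemma**. -/
theorem exists_hasDensityOne_tendsto_zero {u : ℕ → ℝ} (hu : ∀ j, 0 ≤ u j)
    (hmean : Tendsto (fun N : ℕ => (∑ j ∈ range N, u j) / N) atTop (𝓝 0)) :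
    ∃ J : Set ℕ, HasDensityOne J ∧ Tendsto u (atTop ⊓ 𝓟 J) (𝓝 0) := by
  -- The summand `1 / (N + 1)` makes the majorant `e` positive.
  obtain ⟨e, he, hle, hlim⟩ := exists_antitone_le_tendsto
    (by simpa using hmean.add tendsto_one_div_add_atTop_nhds_zero_nat :
      Tendsto (fun N : ℕ => (∑ j ∈ range N, u j) / N + 1 / ((N : ℝ) + 1)) atTop (𝓝 0))
  have hmean_nonneg (N : ℕ) : 0 ≤ (∑ j ∈ range N, u j) / N :=
    div_nonneg (sum_nonneg fun j _ => hu j) N.cast_nonneg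
  have he_pos (N : ℕ) : 0 < e N :=
    (add_pos_of_nonneg_of_pos (hmean_nonneg N) Nat.one_div_pos_of_nat).trans_le (hle N)
  have hmean_le (N : ℕ) : (∑ j ∈ range N, u j) / N ≤ e N :=
    (le_add_of_nonneg_right Nat.one_div_pos_of_nat.le).trans (hle N)
  have hsqrt : Tendsto (fun N => √(e N)) atTop (𝓝 0) := by simpa using hlim.sqrt
  refine ⟨{j | u j ≤ √(e j)}, hasDensityOne_of_tendsto_compl ?_, ?_⟩
  · refine squeeze_zero' (.of_forall fun N => by positivity) ?_ hsqrt
    filter_upwards [eventually_gt_atTop 0] with N hN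
    have hcard : (({j | u j ≤ √(e j)}ᶜ ∩ Set.Iio N).ncard : ℝ) * √(e N) ≤ e N * N := by
      simp only [Set.compl_ofPred, not_le]
      refine (ncard_setOf_lt_mul_le_sum hu (fun M N h => Real.sqrt_le_sqrt (he h)) N).trans ?_
      exact (div_le_iff₀ (by positivity)).1 (hmean_le N)
    rw [div_le_iff₀ (by positivity), ← mul_le_mul_iff_left₀ (Real.sqrt_pos.2 (he_pos N))]
    calc _ ≤ e N * N := hcard
      _ = √(e N) * N * √(e N) := by rw [mul_right_comm, Real.mul_self_sqrt (he_pos N).le]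
  · exact squeeze_zero' (.of_forall hu) (eventually_inf_principal.2 (.of_forall fun _ h => h))
      (hsqrt.mono_left inf_le_left)

end Density

section Digits

/-- The number of digits equal to `1` in the base `Q` expansion of `j`. -/
def onesCount (Q j : ℕ) : ℕ := (Nat.digits Q j).count 1

lemma onesCount_add_mul {Q c : ℕ} (hQ : 1 < Q) (hc : c < Q) (j : ℕ) :
    onesCount Q (c + Q * j) = (if c = 1 then 1 else 0) + onesCount Q j := by
  by_cases h : c ≠ 0 ∨ j ≠ 0
  · simp [onesCount, Nat.digits_add Q hQ c j hc h, List.count_cons, add_comm]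
  · obtain ⟨rfl, rfl⟩ : c = 0 ∧ j = 0 := by simpa using h
    simp [onesCount]

lemma sum_range_mul_pow_onesCount {R : Type*} [CommRing R] {Q : ℕ} (hQ : 1 < Q) (z : R) (M : ℕ) :
    ∑ j ∈ range (Q * M), z ^ onesCount Q j =
      (Q - 1 + z) * ∑ j ∈ range M, z ^ onesCount Q j := by
  have hdigit : ∑ c ∈ range Q, z ^ (if c = 1 then 1 else 0) = Q - 1 + z := by
    simp_rw [pow_ite, pow_one, pow_zero]
    rw [← add_sum_erase _ _ (mem_range.2 hQ), sum_congr rfl fun c hc =>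
      if_neg (ne_of_mem_erase hc)]
    simp [card_erase_of_mem (mem_range.2 hQ), Nat.cast_sub hQ.le, add_comm]
  induction M with
  | zero => simp
  | succ M ih =>
    have hblock : ∑ c ∈ range Q, z ^ onesCount Q (Q * M + c) =
        (Q - 1 + z) * z ^ onesCount Q M := by
      rw [← hdigit, sum_mul]
      refine sum_congr rfl fun c hc => ?_
      rw [add_comm, onesCount_add_mul hQ (mem_range.1 hc), pow_add]
    rw [mul_add_one, sum_range_add, ih, hblock, sum_range_succ, mul_add]

lemma sum_range_pow_pow_onesCount {R : Type*} [CommRing R] {Q : ℕ} (hQ : 1 < Q) (z : R) (n : ℕ) :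
    ∑ j ∈ range (Q ^ n), z ^ onesCount Q j = (Q - 1 + z) ^ n := by
  induction n with
  | zero => simp [onesCount]
  | succ n ih => rw [pow_succ', sum_range_mul_pow_onesCount hQ, ih, pow_succ']

lemma tendsto_natLog_atTop {Q : ℕ} (hQ : 1 < Q) : Tendsto (Nat.log Q) atTop atTop :=
  tendsto_atTop_atTop.2 fun b => ⟨Q ^ b, fun _ hn => Nat.le_log_of_pow_le hQ hn⟩

lemma tendsto_mean_zero_of_tendsto_mean_pow {Q : ℕ} (hQ : 1 < Q) {u : ℕ → ℝ} (hu : ∀ j, 0 ≤ u j)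
    (h : Tendsto (fun n : ℕ => (∑ j ∈ range (Q ^ n), u j) / (Q : ℝ) ^ n) atTop (𝓝 0)) :
    Tendsto (fun N : ℕ => (∑ j ∈ range N, u j) / N) atTop (𝓝 0) := by
  have hlim := ((h.comp (tendsto_add_atTop_nat 1)).comp (tendsto_natLog_atTop hQ)).const_mul (Q : ℝ)
  rw [mul_zero] at hlim
  refine squeeze_zero' (.of_forall fun N => div_nonneg (sum_nonneg fun j _ => hu j)
    N.cast_nonneg) ?_ hlim
  filter_upwards [eventually_gt_atTop 0] with N hN
  have hlower : (Q : ℝ) ^ Nat.log Q N ≤ N := by exact_mod_cast Nat.pow_log_le_self Q hN.ne'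
  calc (∑ j ∈ range N, u j) / N
      ≤ (∑ j ∈ range (Q ^ (Nat.log Q N + 1)), u j) / (Q : ℝ) ^ Nat.log Q N := by
        gcongr
        · exact sum_nonneg fun j _ => hu j
        · exact fun j _ _ => hu j
        · exact (Nat.lt_pow_succ_log_self hQ N).le
    _ = Q * ((∑ j ∈ range (Q ^ (Nat.log Q N + 1)), u j) / (Q : ℝ) ^ (Nat.log Q N + 1)) := by
        rw [pow_succ (Q : ℝ)]
        field_simp

theorem exists_hasDensityOne_tendsto_onesCount {Q : ℕ} (hQ : 1 < Q) :
    ∃ J : Set ℕ, HasDensityOne J ∧ Tendsto (onesCount Q) (atTop ⊓ 𝓟 J) atTop := by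
  have hQ' : (1 : ℝ) < Q := by exact_mod_cast hQ
  have hmean : Tendsto (fun n : ℕ => (∑ j ∈ range (Q ^ n), (1 / 2 : ℝ) ^ onesCount Q j) /
      (Q : ℝ) ^ n) atTop (𝓝 0) := by
    simp_rw [sum_range_pow_pow_onesCount hQ, ← div_pow]
    apply tendsto_pow_atTop_nhds_zero_of_lt_one
    · exact div_nonneg (by linarith) (by linarith)
    · rw [div_lt_one (by linarith)]
      linarith
  obtain ⟨J, hJ, hlim⟩ := exists_hasDensityOne_tendsto_zero (fun j => by positivity)
    (tendsto_mean_zero_of_tendsto_mean_pow hQ (fun j => by positivity) hmean)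
  refine ⟨J, hJ, tendsto_atTop.2 fun b => ?_⟩
  filter_upwards [hlim.eventually_lt_const (by positivity : (0 : ℝ) < (1 / 2) ^ b)] with j hj
  exact ((pow_lt_pow_iff_right_of_lt_one₀ (by norm_num) (by norm_num)).1 hj).le

end Digits

section ResidueSection

open Polynomial

section Semiring

variable {R : Type*} [Semiring R]

lemma coeff_iterate_divX (g : R[X]) (r n : ℕ) : (divX^[r] g).coeff n = g.coeff (n + r) := by
  induction r generalizing n with
  | zero => rfl
  | succ r ih => rw [Function.iterate_succ_apply', coeff_divX, ih, add_right_comm, add_assoc]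

lemma natTrailingDegree_lt_natDegree {f : R[X]} (hf : 2 ≤ #f.support) :
    f.natTrailingDegree < f.natDegree := by
  refine f.natTrailingDegree_le_natDegree.lt_of_ne fun h => ?_
  have hsupp : f.support ⊆ {f.natDegree} := fun n hn => mem_singleton.2 <|
    (le_natDegree_of_mem_supp n hn).antisymm (h ▸ natTrailingDegree_le_of_mem_supp n hn)
  have := card_le_card hsupp
  rw [card_singleton] at this
  omega

lemma card_image_mod_support {Q : ℕ} {g : R[X]} (hg : g.natDegree < Q) :
    #(g.support.image (· % Q)) = #g.support := by
  have hlt {i : ℕ} (hi : i ∈ g.support) : i < Q := (le_natDegree_of_mem_supp i hi).trans_lt hg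
  refine card_image_of_injOn fun i hi k hk hik => ?_
  rwa [← Nat.mod_eq_of_lt (hlt hi), ← Nat.mod_eq_of_lt (hlt hk)]

end Semiring

lemma two_le_card_support_mul {R : Type*} [Semiring R] [NoZeroDivisors R] {f g : R[X]}
    (hg : g ≠ 0) (hf : 2 ≤ #f.support) : 2 ≤ #(g * f).support := by
  have hf0 : f ≠ 0 := by
    rintro rfl
    simp at hf
  have hgf : g * f ≠ 0 := mul_ne_zero hg hf0
  refine one_lt_card.2 ⟨_, natTrailingDegree_mem_support_of_nonzero hgf, _,
    natDegree_mem_support_of_nonzero hgf, ne_of_lt ?_⟩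
  rw [natTrailingDegree_mul hg hf0, natDegree_mul hg hf0]
  exact add_lt_add_of_le_of_lt g.natTrailingDegree_le_natDegree (natTrailingDegree_lt_natDegree hf)

variable {R : Type*} [CommSemiring R]

/-- The section of `g` along the residue class of `r` modulo `Q`: the polynomial whose coefficient
at `n` is the coefficient of `g` at `n * Q + r`. -/
noncomputable def residueSection (Q r : ℕ) (g : R[X]) : R[X] := contract Q (divX^[r] g)

variable {Q : ℕ}

lemma coeff_residueSection (hQ : Q ≠ 0) (r : ℕ) (g : R[X]) (n : ℕ) :
    (residueSection Q r g).coeff n = g.coeff (n * Q + r) := by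
  rw [residueSection, coeff_contract hQ, coeff_iterate_divX]

lemma natDegree_residueSection_le (hQ : Q ≠ 0) (r : ℕ) (g : R[X]) :
    (residueSection Q r g).natDegree ≤ g.natDegree / Q := by
  refine natDegree_le_iff_coeff_eq_zero.2 fun n hn => ?_
  rw [coeff_residueSection hQ]
  apply coeff_eq_zero_of_natDegree_lt
  have := (Nat.div_lt_iff_lt_mul (Nat.pos_of_ne_zero hQ)).1 hn
  omega

lemma residueSection_mul_expand {r : ℕ} (hr : r < Q) (g h : R[X]) :
    residueSection Q r (g * expand R Q h) = residueSection Q r g * h := by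
  have hQ : Q ≠ 0 := by omega
  induction h using Polynomial.induction_on' with
  | add h₁ h₂ ih₁ ih₂ =>
    ext n
    rw [map_add, mul_add, mul_add, ← ih₁, ← ih₂]
    simp only [coeff_residueSection hQ, coeff_add]
  | monomial k a =>
    ext n
    rw [expand_monomial, coeff_residueSection hQ, ← C_mul_X_pow_eq_monomial,
      ← C_mul_X_pow_eq_monomial, ← mul_assoc, ← mul_assoc, coeff_mul_X_pow', coeff_mul_X_pow',
      coeff_mul_C, coeff_mul_C, coeff_residueSection hQ]
    have hle : k * Q ≤ n * Q + r ↔ k ≤ n := by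
      rw [← Nat.le_div_iff_mul_le (by omega), Nat.div_eq_of_lt_le] <;> nlinarith
    simp only [hle]
    split_ifs with hkn
    · obtain ⟨i, rfl⟩ := Nat.exists_eq_add_of_le hkn
      congr 2
      rw [add_tsub_cancel_left, add_mul]
      omega
    · rfl

lemma sum_card_support_residueSection (hQ : Q ≠ 0) (g : R[X]) :
    ∑ r ∈ range Q, #(residueSection Q r g).support = #g.support := by
  rw [← card_sigma]
  refine card_nbij' (fun x => x.2 * Q + x.1) (fun i => ⟨i % Q, i / Q⟩) ?_ ?_ ?_ ?_
  · intro x hx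
    simpa [coeff_residueSection hQ] using (mem_sigma.1 hx).2
  · intro i hi
    simpa [coeff_residueSection hQ, Nat.div_add_mod', Nat.mod_lt i (Nat.pos_of_ne_zero hQ)] using hi
  · rintro ⟨r, n⟩ hx
    have hr : r < Q := by simpa using (mem_sigma.1 hx).1
    have hdiv : (n * Q + r) / Q = n := by rw [Nat.div_eq_of_lt_le] <;> nlinarith
    simp [hdiv, Nat.mod_eq_of_lt hr]
  · exact fun i _ => Nat.div_add_mod' i Q

lemma residueSection_mod_ne_zero (hQ : Q ≠ 0) {g : R[X]} {i : ℕ} (hi : i ∈ g.support) :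
    residueSection Q (i % Q) g ≠ 0 := by
  intro h
  have hcoeff := coeff_residueSection hQ (i % Q) g (i / Q)
  rw [h, coeff_zero, Nat.div_add_mod'] at hcoeff
  exact mem_support_iff.1 hi hcoeff.symm

lemma card_image_mod_mul_le_card_support_mul_expand (hQ : Q ≠ 0) {g h : R[X]} {m : ℕ}
    (hm : ∀ r < Q, residueSection Q r g ≠ 0 → m ≤ #(residueSection Q r g * h).support) :
    #(g.support.image (· % Q)) * m ≤ #(g * expand R Q h).support :=
  calc #(g.support.image (· % Q)) * m
      ≤ ∑ r ∈ g.support.image (· % Q), #(residueSection Q r g * h).support := by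
        rw [← smul_eq_mul]
        refine card_nsmul_le_sum _ _ _ (forall_mem_image.2 fun i hi => ?_)
        exact hm _ (Nat.mod_lt i (Nat.pos_of_ne_zero hQ)) (residueSection_mod_ne_zero hQ hi)
    _ ≤ ∑ r ∈ range Q, #(residueSection Q r g * h).support :=
        sum_le_sum_of_subset <| image_subset_iff.2 fun i _ =>
          mem_range.2 (Nat.mod_lt i (Nat.pos_of_ne_zero hQ))
    _ = ∑ r ∈ range Q, #(residueSection Q r (g * expand R Q h)).support :=
        sum_congr rfl fun r hr => by rw [residueSection_mul_expand (mem_range.1 hr)]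
    _ = #(g * expand R Q h).support := sum_card_support_residueSection hQ _

end ResidueSection

section Frobenius

open Polynomial

lemma mul_pow_eq_mul_pow_mod_mul_expand {R : Type*} [CommSemiring R] (p : ℕ) [ExpChar R p]
    (s j : ℕ) (f g : R[X]) :
    g * f ^ j = g * f ^ (j % p ^ s) *
      expand R (p ^ s) (f.map (iterateFrobenius R p s) ^ (j / p ^ s)) := by
  rw [map_pow, ← map_expand, map_iterateFrobenius_expand, ← pow_mul, mul_assoc, ← pow_add,
    Nat.mod_add_div]

lemma natDegree_mul_pow_le {R : Type*} [Semiring R] {d : ℕ} {f g : R[X]} (hf : f.natDegree ≤ d)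
    (hg : g.natDegree ≤ d) (c : ℕ) : (g * f ^ c).natDegree ≤ (c + 1) * d := by
  calc (g * f ^ c).natDegree ≤ g.natDegree + c * f.natDegree :=
        natDegree_mul_le.trans (by gcongr; exact natDegree_pow_le)
    _ ≤ d + c * d := by gcongr
    _ = (c + 1) * d := by ring

lemma natDegree_residueSection_mul_pow_le {R : Type*} [CommSemiring R] {Q c d : ℕ} (hc : c < Q)
    {f g : R[X]} (hf : f.natDegree ≤ d) (hg : g.natDegree ≤ d) (r : ℕ) :
    (residueSection Q r (g * f ^ c)).natDegree ≤ d := by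
  refine (natDegree_residueSection_le (by omega) r _).trans (Nat.div_le_of_le_mul ?_)
  exact (natDegree_mul_pow_le hf hg c).trans (by gcongr; exact hc)

lemma two_pow_le_card_image_mod_support_mul_pow {R : Type*} [Semiring R] [NoZeroDivisors R]
    {Q d : ℕ} (hd : 2 * d < Q) {f g : R[X]} (hf : 2 ≤ #f.support) (hfd : f.natDegree ≤ d)
    (hg : g ≠ 0) (hgd : g.natDegree ≤ d) (c : ℕ) :
    2 ^ (if c = 1 then 1 else 0) ≤ #((g * f ^ c).support.image (· % Q)) := by
  split_ifs with hc
  · subst hc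
    have hdeg : (g * f).natDegree < Q := by
      simpa using (natDegree_mul_pow_le hfd hgd 1).trans_lt hd
    rw [pow_one, pow_one, card_image_mod_support hdeg]
    exact two_le_card_support_mul hg hf
  · have hf0 : f ≠ 0 := by
      rintro rfl
      simp at hf
    exact card_pos.2 ((support_nonempty.2 (mul_ne_zero hg (pow_ne_zero c hf0))).image _)

theorem two_pow_onesCount_le_card_support_mul_pow {R : Type*} [CommRing R] [IsDomain R]
    {p d s : ℕ} [ExpChar R p] (hd : 2 * d < p ^ s) {f g : R[X]} (hf : 2 ≤ #f.support)
    (hfd : f.natDegree ≤ d) (hg : g ≠ 0) (hgd : g.natDegree ≤ d) (j : ℕ) :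
    2 ^ onesCount (p ^ s) j ≤ #(g * f ^ j).support := by
  induction j using Nat.strong_induction_on generalizing f g with
  | _ j ih =>
  rcases Nat.eq_zero_or_pos j with rfl | hj
  · simpa [onesCount, Nat.one_le_iff_ne_zero] using hg
  have hQ : 1 < p ^ s := by
    have := natTrailingDegree_lt_natDegree hf
    omega
  have hc : j % p ^ s < p ^ s := Nat.mod_lt j (by omega)
  have hfrob : Function.Injective (iterateFrobenius R p s) := iterateFrobenius_inj R p s
  have hsection (r : ℕ) (hr : residueSection (p ^ s) r (g * f ^ (j % p ^ s)) ≠ 0) :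
      2 ^ onesCount (p ^ s) (j / p ^ s) ≤ #(residueSection (p ^ s) r (g * f ^ (j % p ^ s)) *
        f.map (iterateFrobenius R p s) ^ (j / p ^ s)).support :=
    ih _ (Nat.div_lt_self hj hQ) (by rwa [support_map_of_injective f hfrob])
      (natDegree_map_le.trans hfd) hr (natDegree_residueSection_mul_pow_le hc hfd hgd r)
  calc 2 ^ onesCount (p ^ s) j
      = 2 ^ (if j % p ^ s = 1 then 1 else 0) * 2 ^ onesCount (p ^ s) (j / p ^ s) := by
        rw [← pow_add, ← onesCount_add_mul hQ hc, Nat.mod_add_div]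
    _ ≤ #((g * f ^ (j % p ^ s)).support.image (· % p ^ s)) *
        2 ^ onesCount (p ^ s) (j / p ^ s) :=
        Nat.mul_le_mul_right _ (two_pow_le_card_image_mod_support_mul_pow hd hf hfd hg hgd _)
    _ ≤ #(g * f ^ (j % p ^ s) *
        expand R (p ^ s) (f.map (iterateFrobenius R p s) ^ (j / p ^ s))).support :=
        card_image_mod_mul_le_card_support_mul_expand (by omega) fun r _ => hsection r
    _ = #(g * f ^ j).support := by rw [← mul_pow_eq_mul_pow_mod_mul_expand]

end Frobenius

section GroupRing

lemma exists_dual_forall_mem_apply_ne_zero {R M : Type*} [CommRing R] [IsDomain R] [Infinite R]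
    [AddCommGroup M] [Module R M] [Module.Projective R M] (s : Finset M) (hs : 0 ∉ s) :
    ∃ φ : Module.Dual R M, ∀ v ∈ s, φ v ≠ 0 := by
  classical
  induction s using Finset.induction_on with
  | empty => exact ⟨0, by simp⟩
  | insert v s _ ih =>
    rw [mem_insert, not_or] at hs
    obtain ⟨φ, hφ⟩ := ih hs.2
    obtain ⟨ψ, hψ⟩ : ∃ ψ : Module.Dual R M, ψ v ≠ 0 := by
      by_contra! h
      exact hs.1 ((Module.forall_dual_apply_eq_zero_iff R v).1 h).symm
    have hfin : (⋃ w ∈ insert v s, {t : R | (ψ + t • φ) w = 0}).Finite := by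
      refine (insert v s).finite_toSet.biUnion fun w hw => Set.Subsingleton.finite ?_
      intro t ht t' ht'
      have hφw : φ w ≠ 0 := by
        intro h0
        obtain rfl | hws := mem_insert.1 hw
        · exact hψ (by simpa [h0] using ht)
        · exact hφ w hws h0
      have heq : t * φ w = t' * φ w := add_left_cancel (Eq.trans ht ht'.symm)
      exact mul_right_cancel₀ hφw heq
    obtain ⟨t, ht⟩ := hfin.infinite_compl.nonempty
    simp only [Set.mem_compl_iff, Set.mem_iUnion, not_exists] at ht
    exact ⟨ψ + t • φ, ht⟩

lemma exists_addMonoidHom_int_injOn {G : Type*} [AddCommGroup G] [Module.Free ℤ G]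
    (s : Finset G) : ∃ φ : G →+ ℤ, Set.InjOn φ s := by
  classical
  obtain ⟨φ, hφ⟩ := exists_dual_forall_mem_apply_ne_zero (R := ℤ)
    ((image₂ (· - ·) s s).erase 0) (notMem_erase 0 _)
  refine ⟨φ.toAddMonoidHom, fun a ha b hb hab => by_contra fun hne => ?_⟩
  refine hφ (a - b) (mem_erase.2 ⟨sub_ne_zero.2 hne, mem_image₂_of_mem ha hb⟩) ?_
  rw [map_sub, sub_eq_zero]
  exact hab

open Polynomial LaurentPolynomial

lemma card_support_coeff_mul_T {R : Type*} [Semiring R] (f : R[T;T⁻¹]) (n : ℤ) :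
    #(f * T n).coeff.support = #f.coeff.support := by
  rw [T, AddMonoidAlgebra.support_coeff_mul_single _ _ (by simp), card_map]

lemma exists_polynomial_card_support_mul_pow_eq {R : Type*} [CommSemiring R] (f g : R[T;T⁻¹]) :
    ∃ P Q : R[X], #P.support = #f.coeff.support ∧ #Q.support = #g.coeff.support ∧
      ∀ j, #(Q * P ^ j).support = #(g * f ^ j).coeff.support := by
  have hcard (P : R[X]) : #P.support = #(toLaurent P).coeff.support := by
    rw [support_coeff_toLaurent, card_map]
  obtain ⟨m, P, hP⟩ := exists_T_pow f
  obtain ⟨n, Q, hQ⟩ := exists_T_pow g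
  refine ⟨P, Q, ?_, ?_, fun j => ?_⟩
  · rw [hcard, hP, card_support_coeff_mul_T]
  · rw [hcard, hQ, card_support_coeff_mul_T]
  · have hmul : toLaurent (Q * P ^ j) = g * f ^ j * T (n + j * m) := by
      rw [map_mul, map_pow, hP, hQ, mul_pow, T_pow, T_add]
      ring
    rw [hcard, hmul, card_support_coeff_mul_T]

lemma exists_laurentPolynomial_card_support_mul_pow_le {R G : Type*} [CommSemiring R]
    [AddCommGroup G] [Module.Free ℤ G] (f g : AddMonoidAlgebra R G) :
    ∃ P Q : R[T;T⁻¹], #P.coeff.support = #f.coeff.support ∧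
      #Q.coeff.support = #g.coeff.support ∧
      ∀ j, #(Q * P ^ j).coeff.support ≤ #(g * f ^ j).coeff.support := by
  classical
  obtain ⟨φ, hφ⟩ := exists_addMonoidHom_int_injOn (f.coeff.support ∪ g.coeff.support)
  have hcard {h : AddMonoidAlgebra R G} (hh : h.coeff.support ⊆ f.coeff.support ∪ g.coeff.support) :
      #(AddMonoidAlgebra.mapDomainRingHom R φ h).coeff.support = #h.coeff.support := by
    have hinj : Set.InjOn φ h.coeff.support := hφ.mono (coe_subset.2 hh)
    rw [← card_image_of_injOn hinj, ← Finsupp.mapDomain_support_of_injOn _ hinj]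
    rfl
  refine ⟨_, _, hcard subset_union_left, hcard subset_union_right, fun j => ?_⟩
  rw [← map_pow, ← map_mul]
  exact (card_le_card Finsupp.mapDomain_support).trans card_image_le

theorem exists_hasDensityOne_tendsto_card_support_mul_pow {R G : Type*} [CommRing R] [IsDomain R]
    (p : ℕ) [Fact p.Prime] [CharP R p] [AddCommGroup G] [Module.Free ℤ G]
    {f g : AddMonoidAlgebra R G} (hf : 2 ≤ #f.coeff.support) (hg : g ≠ 0) :
    ∃ J : Set ℕ, HasDensityOne J ∧
      Tendsto (fun j => #(g * f ^ j).coeff.support) (atTop ⊓ 𝓟 J) atTop := by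
  obtain ⟨f₁, g₁, hf₁, hg₁, hle⟩ := exists_laurentPolynomial_card_support_mul_pow_le f g
  obtain ⟨P, Q, hP, hQ, heq⟩ := exists_polynomial_card_support_mul_pow_eq f₁ g₁
  have hQ0 : Q ≠ 0 := by
    rw [← support_nonempty, ← card_pos, hQ, hg₁, card_pos, Finsupp.support_nonempty_iff]
    simpa using hg
  set d := max P.natDegree Q.natDegree
  have hd : 2 * d + 1 < p ^ (2 * d + 1) := Nat.lt_pow_self (Fact.out : p.Prime).one_lt
  obtain ⟨J, hJ, hlim⟩ := exists_hasDensityOne_tendsto_onesCount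
    (Nat.one_lt_pow (by omega) (Fact.out : p.Prime).one_lt : 1 < p ^ (2 * d + 1))
  refine ⟨J, hJ, tendsto_atTop_mono (fun j => ?_) hlim⟩
  calc onesCount (p ^ (2 * d + 1)) j ≤ 2 ^ onesCount (p ^ (2 * d + 1)) j := Nat.lt_two_pow_self.le
    _ ≤ #(Q * P ^ j).support :=
        two_pow_onesCount_le_card_support_mul_pow (by omega) (by omega) (le_max_left _ _) hQ0
          (le_max_right _ _) j
    _ ≤ #(g * f ^ j).coeff.support := (heq j).trans_le (hle j)

end GroupRing

section Duality

section LinearCA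

variable {R G : Type*} [CommSemiring R] [AddCommMonoid G]

/-- The linear cellular automaton `∑ u, f u • σ ^ u` on configurations `G → R`, as an action of the
group ring in which the monomial at `u` acts by the shift `(σ ^ u a) n = a (n + u)`. -/
noncomputable def linearCA : AddMonoidAlgebra R G →ₐ[R] Module.End R (G → R) :=
  AddMonoidAlgebra.lift R _ G
    { toFun u := LinearMap.funLeft R R (· + u.toAdd)
      map_one' := by ext; simp
      map_mul' u v := by ext; simp [LinearMap.funLeft, add_assoc] }

lemma linearCA_apply (f : AddMonoidAlgebra R G) (a : G → R) (n : G) :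
    linearCA f a n = ∑ u ∈ f.coeff.support, f.coeff u * a (n + u) := by
  simp [linearCA, AddMonoidAlgebra.lift_apply, Finsupp.sum, LinearMap.funLeft]

lemma linearCA_single_one_zero [DecidableEq G] (f : AddMonoidAlgebra R G) (q : G) :
    linearCA f (Pi.single q 1) 0 = f.coeff q := by
  simp [linearCA_apply, Pi.single_apply]

end LinearCA

variable {p D : ℕ} [NeZero p]

lemma zmodChar_eq_stdAddChar (k a : ZMod p) :
    zmodChar p k a = ZMod.stdAddChar (k * a) := by
  have hcast : k * a = (((k.val * a.val : ℕ) : ℤ) : ZMod p) := by simp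
  rw [hcast, ZMod.stdAddChar_coe, zmodChar]
  push_cast
  rfl

lemma prodChar_eq_stdAddChar (χ : (Fin D → ℤ) →₀ ZMod p) (a : (Fin D → ℤ) → ZMod p) :
    prodChar χ a = ZMod.stdAddChar (linearCA (.ofCoeff χ) a 0) := by
  simp_rw [prodChar, linearCA_apply, zmodChar_eq_stdAddChar, zero_add]
  exact (map_prod (ZMod.stdAddChar (N := p)).toMonoidHom
    (fun q => Multiplicative.ofAdd (χ q * a q)) χ.support).symm

lemma prodChar_iterate_linearCA (χ : (Fin D → ℤ) →₀ ZMod p)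
    (f : AddMonoidAlgebra (ZMod p) (Fin D → ℤ)) (j : ℕ) (a : (Fin D → ℤ) → ZMod p) :
    prodChar χ ((linearCA f)^[j] a) = prodChar (.ofCoeff χ * f ^ j).coeff a := by
  rw [prodChar_eq_stdAddChar, prodChar_eq_stdAddChar, map_mul, map_pow, Module.End.mul_apply,
    Module.End.pow_apply]

lemma prodChar_injective : Function.Injective (prodChar : ((Fin D → ℤ) →₀ ZMod p) → _) := by
  intro χ ψ h
  ext q
  have hq := congrFun h (Pi.single q 1)
  rw [prodChar_eq_stdAddChar, prodChar_eq_stdAddChar] at hq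
  simpa [linearCA_single_one_zero] using ZMod.injective_stdAddChar hq

end Duality

/-- Every nontrivial linear cellular automaton `F = ∑_{u} f_u σ^u` (at least two
nonzero coefficients) on `(ℤ/p)^{ℤ^D}`, `p` prime, is diffusive in density:
for every nontrivial character `χ` there is a set `J ⊆ ℕ` of Cesàro density 1
such that the rank of `χ ∘ F^j` (expressed by any coefficient system `ψ j`
representing it) tends to infinity along `J`. -/
theorem nontrivial_lca_diffusive_in_density (p D : ℕ) (hp : p.Prime)
    (f : (Fin D → ℤ) →₀ ZMod p) (hf : 2 ≤ f.support.card)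
    (F : ((Fin D → ℤ) → ZMod p) → ((Fin D → ℤ) → ZMod p))
    (hF : ∀ (a : (Fin D → ℤ) → ZMod p) (n : Fin D → ℤ),
      F a n = ∑ u ∈ f.support, f u * a (n + u)) :
    ∀ χ : (Fin D → ℤ) →₀ ZMod p, χ ≠ 0 →
      ∃ J : Set ℕ, HasDensityOne J ∧
        ∀ ψ : ℕ → ((Fin D → ℤ) →₀ ZMod p),
          (∀ (j : ℕ) (a : (Fin D → ℤ) → ZMod p), prodChar (ψ j) a = prodChar χ (F^[j] a)) →
          Tendsto (fun j => (ψ j).support.card) (atTop ⊓ Filter.principal J) atTop := by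
  intro χ hχ
  have : Fact p.Prime := ⟨hp⟩
  have hF_eq : F = linearCA (.ofCoeff f) := by
    ext a n
    rw [hF, linearCA_apply]
  obtain ⟨J, hJ, hlim⟩ := exists_hasDensityOne_tendsto_card_support_mul_pow p
    (f := .ofCoeff f) (g := .ofCoeff χ) hf (by simpa using hχ)
  refine ⟨J, hJ, fun ψ hψ => ?_⟩
  have hψ_eq (j : ℕ) : ψ j = (.ofCoeff χ * .ofCoeff f ^ j : AddMonoidAlgebra _ _).coeff :=
    prodChar_injective <| funext fun a => by rw [hψ, hF_eq, prodChar_iterate_linearCA]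
  simpa only [hψ_eq] using hlim
end
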